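/- Let (R,m) be a non-Gorenstein Noetherian local ring with m³ = (0), m² ≠ (0), type r, and suppose M is a nonfree indecomposable finitely generated R-module of G-dimension zero. Then dim_k Ext¹_R(k,R) = r² − 1, where k = R/m. -/

import Mathlib

open CategoryTheory

noncomputable abbrev ExtGrp (R : Type) [CommRing R] (M N : Type) [AddCommGroup M] [Module R M]
    [AddCommGroup N] [Module R N] (i : ℕ) : Type :=
  ((Ext R (ModuleCat R) i).obj (Opposite.op (ModuleCat.of R M))).obj (ModuleCat.of R N)

/-- G-dimension zero. -/
def GDimZero (R : Type) [CommRing R] (M : Type) [AddCommGroup M] [Module R M] : Prop :=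
  Function.Bijective (Module.Dual.eval R M) ∧
  (∀ i : ℕ, 0 < i → Subsingleton (ExtGrp R M R i)) ∧
  (∀ i : ℕ, 0 < i → Subsingleton (ExtGrp R (Module.Dual R M) R i))

/-- finite self-injective dimension -/
def HasFiniteSelfInjDim (R : Type) [CommRing R] : Prop :=
  ∃ n : ℕ, ∀ (N : ModuleCat R) (i : ℕ), n < i →
    Subsingleton (((Ext R (ModuleCat R) i).obj (Opposite.op N)).obj (ModuleCat.of R R))

/-- Gorenstein local ring -/
def IsGorensteinLocalRing (R : Type) [CommRing R] : Prop :=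
  IsNoetherianRing R ∧ IsLocalRing R ∧ HasFiniteSelfInjDim R

/-- length of a module, as Krull dimension of its submodule lattice -/
noncomputable def mlength (R : Type) [CommRing R] (M : Type) [AddCommGroup M] [Module R M] :
    WithBot ℕ∞ :=
  Order.krullDim (Submodule R M)

/-- An indecomposable (nonzero) module: it is not a direct sum of two proper submodules. -/
def IsIndecomposableModule (R : Type) [CommRing R] (M : Type) [AddCommGroup M]
    [Module R M] : Prop :=
  (⊥ : Submodule R M) ≠ ⊤ ∧
    ∀ N₁ N₂ : Submodule R M, IsCompl N₁ N₂ → N₁ = ⊥ ∨ N₂ = ⊥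

/-- the type of a local ring: length of Hom(k, R) -/
noncomputable def typeLen (R : Type) [CommRing R] [IsLocalRing R] : WithBot ℕ∞ :=
  mlength R ((R ⧸ IsLocalRing.maximalIdeal R) →ₗ[R] R)

/-!
Write `k = R/m`, `r = ℓ(Hom(k, R))`, `ε = ℓ(Ext¹(k, R))` and `b(X) = ℓ(X/mX)`. As `M` is
indecomposable and not free, all its linear forms take values in `m`; since `m³ = 0` and `M` is
reflexive, `m²` kills `M`, and hence also `M*`.

For `X = M` and `X = M*`, the long exact sequence of `0 → mX → X → X/mX → 0` and `Ext¹(X, R) = 0`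
give `ℓ(X) r = ℓ(X*) + b(X) ε`. Suppose `ε ≠ 0`. Then `k` is not a direct summand of `X`, so the
socle of `X` is `mX`; it is also the socle `Hom(X*/mX*, R)` of `X**`, so `ℓ(X) = b(X) + b(X*) r`.
Eliminating the lengths leaves `b(X) r² = b(X) + b(X*) ε`, and adding the two equations yields
`r² = 1 + ε`. If `ε = 0`, dualizing multiplies lengths by `r`, so `ℓ(M) = ℓ(M) r²` and `r = 1`.
-/

/-- The cokernel of the restriction map `Hom(X, L) → Hom(A, L)` along `i : A → X`, i.e. the
obstruction to extending maps `A → L` to `X`. It is `Ext¹(X/A, L)` when `Ext¹(X, L) = 0`. -/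
abbrev HomCokernel {R A X : Type*} [CommRing R] [AddCommGroup A] [Module R A] [AddCommGroup X]
    [Module R X] (i : A →ₗ[R] X) (L : Type*) [AddCommGroup L] [Module R L] :=
  (A →ₗ[R] L) ⧸ LinearMap.range (LinearMap.lcomp R L i)

namespace HomCokernel

variable {R A B X P N : Type*} [CommRing R] [AddCommGroup A] [Module R A] [AddCommGroup B]
  [Module R B] [AddCommGroup X] [Module R X] [AddCommGroup P] [Module R P] [AddCommGroup N]
  [Module R N] {L : Type*} [AddCommGroup L] [Module R L]

lemma subsingleton_iff (i : A →ₗ[R] X) (L : Type*) [AddCommGroup L] [Module R L] :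
    Subsingleton (HomCokernel i L) ↔ Function.Surjective (LinearMap.lcomp R L i) := by
  rw [Submodule.Quotient.subsingleton_iff, LinearMap.range_eq_top]

/-- Isomorphic subobjects of `X` have isomorphic cokernels. -/
noncomputable def congr (e : A ≃ₗ[R] B) (j : B →ₗ[R] X) (L : Type*) [AddCommGroup L] [Module R L] :
    HomCokernel j L ≃ₗ[R] HomCokernel (j ∘ₗ e.toLinearMap) L :=
  Submodule.Quotient.equiv _ _ (LinearEquiv.congrLeft L R e.symm) <| by
    rw [← LinearMap.range_comp]
    rfl

/-- A short exact sequence `A → X → N` computes the same cokernel as `ker (X → N) ≤ X`. -/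
noncomputable def equivKer {i : A →ₗ[R] X} {q : X →ₗ[R] N} (hi : Function.Injective i)
    (hiq : Function.Exact i q) (L : Type*) [AddCommGroup L] [Module R L] :
    HomCokernel (LinearMap.ker q).subtype L ≃ₗ[R] HomCokernel i L :=
  congr ((LinearEquiv.ofInjective i hi).trans (.ofEq _ _ hiq.linearMap_ker_eq.symm)) _ L

/-- Restriction along the projection of the preimage `s⁻¹(A) ≤ P` onto `A ≤ X`. -/
def comap (s : P →ₗ[R] X) (A : Submodule R X) (L : Type*) [AddCommGroup L] [Module R L] :
    HomCokernel A.subtype L →ₗ[R] HomCokernel (A.comap s).subtype L :=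
  Submodule.mapQ _ _ (LinearMap.lcomp R L (s.submoduleComap A)) <| by
    rintro _ ⟨g, rfl⟩
    exact ⟨g ∘ₗ s, rfl⟩

lemma exists_comp_eq_of_ker_le {s : P →ₗ[R] X} (hs : Function.Surjective s) (g : P →ₗ[R] L)
    (hg : LinearMap.ker s ≤ LinearMap.ker g) : ∃ h : X →ₗ[R] L, h ∘ₗ s = g :=
  (LinearMap.exact_lcomp_of_exact_of_surjective L (LinearMap.exact_subtype_ker_map s) hs g).1 <|
    LinearMap.ext fun x ↦ hg x.2

/-- The first cohomology of `Hom(-, L)` on an exact sequence `P₂ → P₁ → P₀ → N`. -/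
noncomputable def equivCohomology {P₀ P₁ P₂ : Type*} [AddCommGroup P₀] [Module R P₀]
    [AddCommGroup P₁] [Module R P₁] [AddCommGroup P₂] [Module R P₂] {d₂ : P₂ →ₗ[R] P₁}
    {d₁ : P₁ →ₗ[R] P₀} {π : P₀ →ₗ[R] N} (hd₂ : Function.Exact d₂ d₁) (hd₁ : Function.Exact d₁ π)
    (L : Type*) [AddCommGroup L] [Module R L] :
    HomCokernel (LinearMap.ker π).subtype L ≃ₗ[R] LinearMap.ker (LinearMap.lcomp R L d₂) ⧸
      (LinearMap.range (LinearMap.lcomp R L d₁)).submoduleOf _ :=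
  let δ : P₁ →ₗ[R] LinearMap.ker π := d₁.codRestrict _ hd₁.apply_apply_eq_zero
  have hδ : Function.Surjective δ := fun z ↦ (hd₁ z).1 z.2 |>.imp fun _ ↦ Subtype.ext
  have hδd₂ : δ ∘ₗ d₂ = 0 := LinearMap.ext fun x ↦ Subtype.ext (hd₂.apply_apply_eq_zero x)
  let toCocycles : (LinearMap.ker π →ₗ[R] L) →ₗ[R] LinearMap.ker (LinearMap.lcomp R L d₂) :=
    (LinearMap.lcomp R L δ).codRestrict _ fun f ↦ by
      rw [LinearMap.mem_ker, LinearMap.lcomp_apply', LinearMap.lcomp_apply', LinearMap.comp_assoc,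
        hδd₂, LinearMap.comp_zero]
  have hinj : Function.Injective toCocycles := fun f g hfg ↦
    LinearMap.lcomp_injective_of_surjective δ hδ (congrArg Subtype.val hfg)
  have hsurj : Function.Surjective toCocycles := fun h ↦ by
    obtain ⟨f, hf⟩ := exists_comp_eq_of_ker_le hδ h.1 fun x hx ↦ by
      obtain ⟨w, rfl⟩ := (hd₂ x).1 (congrArg Subtype.val hx)
      exact LinearMap.congr_fun h.2 w
    exact ⟨f, Subtype.ext hf⟩
  Submodule.Quotient.equiv _ _ (.ofBijective toCocycles ⟨hinj, hsurj⟩) <| by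
    apply le_antisymm
    · rintro _ ⟨_, ⟨g, rfl⟩, rfl⟩
      exact ⟨g, rfl⟩
    · rintro _ ⟨g, hg⟩
      exact ⟨_, ⟨g, rfl⟩, Subtype.ext hg⟩

lemma comap_injective {s : P →ₗ[R] X} (hs : Function.Surjective s) (A : Submodule R X) :
    Function.Injective (comap s A L) := by
  rw [← LinearMap.ker_eq_bot, Submodule.eq_bot_iff]
  intro y hy
  obtain ⟨f, rfl⟩ := Submodule.Quotient.mk_surjective _ y
  obtain ⟨g, hg⟩ := (Submodule.Quotient.mk_eq_zero _).1 hy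
  have hgs : ∀ x (hx : s x ∈ A), g x = f ⟨s x, hx⟩ := fun x hx ↦ LinearMap.congr_fun hg ⟨x, hx⟩
  obtain ⟨h, rfl⟩ := exists_comp_eq_of_ker_le hs g fun x (hx : s x = 0) ↦ by
    rw [LinearMap.mem_ker, hgs x (hx ▸ A.zero_mem)]
    simp only [hx]
    exact f.map_zero
  refine (Submodule.Quotient.mk_eq_zero _).2 ⟨h, LinearMap.ext fun a ↦ ?_⟩
  obtain ⟨x, hx⟩ := hs a
  have := hgs x (hx ▸ a.2)
  simp_all

lemma comap_surjective {s : P →ₗ[R] X} (hs : Function.Surjective s)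
    (hext : Function.Surjective (LinearMap.lcomp R L (LinearMap.ker s).subtype))
    (A : Submodule R X) : Function.Surjective (comap s A L) := by
  intro y
  obtain ⟨h, rfl⟩ := Submodule.Quotient.mk_surjective _ y
  have hle : LinearMap.ker s ≤ A.comap s := LinearMap.ker_le_comap s
  obtain ⟨g, hg⟩ := hext (h ∘ₗ Submodule.inclusion hle)
  obtain ⟨f, hf⟩ := exists_comp_eq_of_ker_le (s.submoduleComap_surjective_of_surjective A hs)
    (h - g ∘ₗ (A.comap s).subtype) fun x hx ↦ by
      have hx' : s x = 0 := congrArg Subtype.val hx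
      have := LinearMap.congr_fun hg ⟨x, hx'⟩
      exact sub_eq_zero.2 this.symm
  refine ⟨Submodule.Quotient.mk f, (Submodule.Quotient.eq _).2 ⟨-g, ?_⟩⟩
  change _ = f ∘ₗ _ - h
  rw [hf]
  ext x
  simp

/-- If every map `ker s → L` extends to `P`, then the cokernels for `A ≤ X` and for its preimage
under `s : P → X` agree. -/
noncomputable def comapEquiv {s : P →ₗ[R] X} (hs : Function.Surjective s)
    (hext : Function.Surjective (LinearMap.lcomp R L (LinearMap.ker s).subtype))
    (A : Submodule R X) :
    HomCokernel A.subtype L ≃ₗ[R] HomCokernel (A.comap s).subtype L :=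
  .ofBijective (comap s A L) ⟨comap_injective hs A, comap_surjective hs hext A⟩

lemma lcomp_ker_subtype_surjective_of_projective [Module.Projective R X] {s : P →ₗ[R] X}
    (hs : Function.Surjective s) :
    Function.Surjective (LinearMap.lcomp R L (LinearMap.ker s).subtype) := by
  intro f
  obtain ⟨t, ht⟩ := Module.projective_lifting_property s LinearMap.id hs
  have hker : ∀ x, (LinearMap.id - t ∘ₗ s : P →ₗ[R] P) x ∈ LinearMap.ker s := fun x ↦ by
    simpa [sub_eq_zero] using (LinearMap.congr_fun ht (s x)).symm
  refine ⟨f ∘ₗ LinearMap.codRestrict _ _ hker, LinearMap.ext fun x ↦ congrArg f ?_⟩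
  ext
  simp

-- Both cokernels agree with the one of the kernel of `P × X → N`: each of the two surjections
-- `P × X → P` and `P × X → X` over `N` splits.
lemma nonempty_equiv_of_projective [Module.Projective R P] [Module.Projective R X]
    {π : P →ₗ[R] N} (hπ : Function.Surjective π) {q : X →ₗ[R] N} (hq : Function.Surjective q)
    (L : Type*) [AddCommGroup L] [Module R L] :
    Nonempty (HomCokernel (LinearMap.ker π).subtype L ≃ₗ[R]
      HomCokernel (LinearMap.ker q).subtype L) := by
  obtain ⟨s, hs⟩ := Module.projective_lifting_property q π hq
  obtain ⟨t, ht⟩ := Module.projective_lifting_property π q hπ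
  let toP : P × X →ₗ[R] P := LinearMap.coprod LinearMap.id t
  let toX : P × X →ₗ[R] X := LinearMap.coprod s LinearMap.id
  have htoP : Function.Surjective toP := fun x ↦ ⟨(x, 0), by simp [toP]⟩
  have htoX : Function.Surjective toX := fun x ↦ ⟨(0, x), by simp [toX]⟩
  have hker : (LinearMap.ker π).comap toP = (LinearMap.ker q).comap toX := by
    rw [← LinearMap.ker_comp, ← LinearMap.ker_comp, LinearMap.comp_coprod, LinearMap.comp_coprod,
      hs, ht, LinearMap.comp_id, LinearMap.comp_id]
  have e := comapEquiv (L := L) htoP (lcomp_ker_subtype_surjective_of_projective htoP)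
    (LinearMap.ker π)
  rw [hker] at e
  exact ⟨e.trans (comapEquiv htoX (lcomp_ker_subtype_surjective_of_projective htoX) _).symm⟩

/-- The cokernel commutes with finite powers of `i`. -/
noncomputable def compLeftEquiv (ι : Type*) [Finite ι] (i : A →ₗ[R] X) (L : Type*) [AddCommGroup L]
    [Module R L] : HomCokernel (i.compLeft ι) L ≃ₗ[R] (ι → HomCokernel i L) := by
  classical
  have := Fintype.ofFinite ι
  refine (Submodule.Quotient.equiv _ (Submodule.pi Set.univ fun _ ↦ LinearMap.range
    (LinearMap.lcomp R L i)) (LinearMap.lsum R (fun _ : ι ↦ A) R).symm ?_).trans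
    (Submodule.quotientPi fun _ : ι ↦ LinearMap.range (LinearMap.lcomp R L i))
  have hrestrict : ∀ (h : (ι → X) →ₗ[R] L) (j : ι),
      (LinearMap.lsum R (fun _ : ι ↦ A) R).symm (h ∘ₗ i.compLeft ι) j =
        (LinearMap.lsum R (fun _ : ι ↦ X) R).symm h j ∘ₗ i := fun h j ↦ by
    ext a
    refine congrArg h (funext fun k ↦ ?_)
    rcases eq_or_ne k j with rfl | hkj
    · simp
    · simp [hkj]
  apply le_antisymm
  · rintro _ ⟨_, ⟨h, rfl⟩, rfl⟩ j -
    exact ⟨(LinearMap.lsum R (fun _ : ι ↦ X) R).symm h j, (hrestrict h j).symm⟩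
  · intro f hf
    choose g hg using fun j ↦ hf j trivial
    refine ⟨LinearMap.lsum R (fun _ ↦ X) R g ∘ₗ i.compLeft ι, ⟨_, rfl⟩, funext fun j ↦ ?_⟩
    refine (hrestrict _ j).trans ?_
    rw [LinearEquiv.symm_apply_apply]
    exact hg j

end HomCokernel

namespace ExtGrp

variable {R : Type} [CommRing R] {N N' A X : Type} [AddCommGroup N] [Module R N] [AddCommGroup N']
  [Module R N'] [AddCommGroup A] [Module R A] [AddCommGroup X] [Module R X] {L : Type}
  [AddCommGroup L] [Module R L]

/-- Precomposition with `f` on `Ext`. -/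
noncomputable def precomp (f : N →ₗ[R] N') (L : Type) [AddCommGroup L] [Module R L] (n : ℕ) :
    ExtGrp R N' L n →ₗ[R] ExtGrp R N L n :=
  (((Ext R (ModuleCat R) n).map (ModuleCat.ofHom f).op).app (ModuleCat.of R L)).hom

lemma precomp_id (n : ℕ) : precomp (LinearMap.id : N →ₗ[R] N) L n = LinearMap.id := by
  have : (ModuleCat.ofHom (LinearMap.id : N →ₗ[R] N)) = 𝟙 _ := rfl
  simp [precomp, this]

lemma precomp_comp (f : N →ₗ[R] N') (g : N' →ₗ[R] X) (n : ℕ) :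
    precomp (g ∘ₗ f) L n = precomp f L n ∘ₗ precomp g L n := by
  simp [precomp]

lemma subsingleton_of_retract {ι : N →ₗ[R] X} {ρ : X →ₗ[R] N} (h : ρ ∘ₗ ι = LinearMap.id) {n : ℕ}
    [hX : Subsingleton (ExtGrp R X L n)] : Subsingleton (ExtGrp R N L n) := by
  have hinj : Function.LeftInverse (precomp ι L n) (precomp ρ L n) := fun y ↦ by
    rw [← LinearMap.comp_apply, ← precomp_comp, h, precomp_id, LinearMap.id_apply]
  exact hinj.injective.subsingleton

/-- `Ext` is invariant under isomorphism in the first variable. -/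
noncomputable def congr (e : N ≃ₗ[R] N') (L : Type) [AddCommGroup L] [Module R L] (n : ℕ) :
    ExtGrp R N' L n ≃ₗ[R] ExtGrp R N L n :=
  .ofLinearMap (precomp e.toLinearMap L n) (precomp e.symm.toLinearMap L n)
    (by rw [← precomp_comp]; simp [precomp_id]) (by rw [← precomp_comp]; simp [precomp_id])

/-- `Ext¹` is the first cohomology of `Hom(-, L)` on a projective resolution. -/
noncomputable def equivOfProjectiveResolution (P : ProjectiveResolution (ModuleCat.of R N))
    (L : Type) [AddCommGroup L] [Module R L] :
    ExtGrp R N L 1 ≃ₗ[R] LinearMap.ker (LinearMap.lcomp R L (P.complex.d 2 1).hom) ⧸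
      (LinearMap.range (LinearMap.lcomp R L (P.complex.d 1 0).hom)).submoduleOf _ :=
  let K := P.complex.linearYonedaObj R (ModuleCat.of R L)
  let S := K.sc' 0 1 2
  let toHomology :
      ExtGrp R N L 1 ≃ₗ[R] LinearMap.ker S.g.hom ⧸ LinearMap.range S.moduleCatToCycles :=
    (P.isoExt (R := R) 1 (ModuleCat.of R L) ≪≫
      ShortComplex.homologyMapIso (K.isoSc' 0 1 2 (by simp) (by simp)) ≪≫
      S.moduleCatHomologyIso).toLinearEquiv
  let homEquiv (n : ℕ) : (P.complex.X n ⟶ ModuleCat.of R L) ≃ₗ[R] (P.complex.X n →ₗ[R] L) :=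
    ModuleCat.homLinearEquiv
  have hker : (LinearMap.ker S.g.hom).map (homEquiv 1).toLinearMap =
      LinearMap.ker (LinearMap.lcomp R L (P.complex.d 2 1).hom) := by
    apply le_antisymm
    · rintro _ ⟨g, hg, rfl⟩
      exact congrArg (homEquiv 2) hg
    · exact fun f hf ↦ ⟨(homEquiv 1).symm f, (homEquiv 2).injective hf, rfl⟩
  let cyclesEquiv := ((homEquiv 1).submoduleMap (LinearMap.ker S.g.hom)).trans (.ofEq _ _ hker)
  toHomology.trans <| Submodule.Quotient.equiv _ _ cyclesEquiv <| by
    apply le_antisymm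
    · rintro _ ⟨_, ⟨g, rfl⟩, rfl⟩
      exact ⟨homEquiv 0 g, rfl⟩
    · rintro f ⟨g, hg⟩
      exact ⟨_, ⟨(homEquiv 0).symm g, rfl⟩, Subtype.ext hg⟩

lemma exists_projective_equiv_homCokernel (N : Type) [AddCommGroup N] [Module R N] (L : Type)
    [AddCommGroup L] [Module R L] :
    ∃ (P : ModuleCat.{0} R) (π : P →ₗ[R] N), Module.Projective R P ∧ Function.Surjective π ∧
      Nonempty (ExtGrp R N L 1 ≃ₗ[R] HomCokernel (LinearMap.ker π).subtype L) := by
  let P := projectiveResolution (ModuleCat.of R N)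
  have hd₂ := (ShortComplex.ShortExact.moduleCat_exact_iff_function_exact _).1 (P.exact_succ 0)
  have hd₁ := (ShortComplex.ShortExact.moduleCat_exact_iff_function_exact _).1 P.exact₀
  exact ⟨P.complex.X 0, (P.π.f 0).hom, (IsProjective.iff_projective (R := R) _).2 (P.projective 0),
    (ModuleCat.epi_iff_surjective (P.π.f 0)).1 inferInstance,
    ⟨(equivOfProjectiveResolution P L).trans (HomCokernel.equivCohomology hd₂ hd₁ L).symm⟩⟩

lemma nonempty_equiv_homCokernel_ker [Module.Projective R X] {q : X →ₗ[R] N}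
    (hq : Function.Surjective q) (L : Type) [AddCommGroup L] [Module R L] :
    Nonempty (ExtGrp R N L 1 ≃ₗ[R] HomCokernel (LinearMap.ker q).subtype L) := by
  obtain ⟨P, π, hP, hπ, ⟨e⟩⟩ := exists_projective_equiv_homCokernel (R := R) N L
  obtain ⟨e'⟩ := HomCokernel.nonempty_equiv_of_projective hπ hq L
  exact ⟨e.trans e'⟩

lemma subsingleton_of_projective (X L : Type) [AddCommGroup X] [Module R X] [AddCommGroup L]
    [Module R L] [Module.Projective R X] : Subsingleton (ExtGrp R X L 1) := by
  obtain ⟨e⟩ := nonempty_equiv_homCokernel_ker (q := (LinearMap.id : X →ₗ[R] X))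
    Function.surjective_id L
  have := (HomCokernel.subsingleton_iff (LinearMap.ker (LinearMap.id : X →ₗ[R] X)).subtype L).2
    (HomCokernel.lcomp_ker_subtype_surjective_of_projective Function.surjective_id)
  exact e.toEquiv.subsingleton

lemma nonempty_equiv_homCokernel {i : A →ₗ[R] X} {q : X →ₗ[R] N} (hi : Function.Injective i)
    (hiq : Function.Exact i q) (hq : Function.Surjective q) [hX : Subsingleton (ExtGrp R X L 1)] :
    Nonempty (ExtGrp R N L 1 ≃ₗ[R] HomCokernel i L) := by
  let s : (X →₀ R) →ₗ[R] X := Finsupp.linearCombination R id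
  have hs : Function.Surjective s := Finsupp.linearCombination_id_surjective R X
  obtain ⟨e⟩ := nonempty_equiv_homCokernel_ker hs L
  obtain ⟨e'⟩ := nonempty_equiv_homCokernel_ker (q := q ∘ₗ s) (hq.comp hs) L
  rw [LinearMap.ker_comp] at e'
  have := e.symm.toEquiv.subsingleton
  have hext := (HomCokernel.subsingleton_iff _ L).1 this
  exact ⟨e'.trans <| (HomCokernel.comapEquiv hs hext (LinearMap.ker q)).symm.trans
    (HomCokernel.equivKer hi hiq L)⟩

lemma lcomp_surjective {i : A →ₗ[R] X} {q : X →ₗ[R] N} (hi : Function.Injective i)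
    (hiq : Function.Exact i q) (hq : Function.Surjective q) [hN : Subsingleton (ExtGrp R N L 1)] :
    Function.Surjective (LinearMap.lcomp R L i) := by
  let s : (X →₀ R) →ₗ[R] X := Finsupp.linearCombination R id
  have hs : Function.Surjective s := Finsupp.linearCombination_id_surjective R X
  obtain ⟨e⟩ := nonempty_equiv_homCokernel_ker (q := q ∘ₗ s) (hq.comp hs) L
  rw [LinearMap.ker_comp] at e
  have := e.symm.toEquiv.subsingleton
  have := (HomCokernel.comap_injective (L := L) hs (LinearMap.ker q)).subsingleton
  have := (HomCokernel.equivKer hi hiq L).symm.toEquiv.subsingleton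
  exact (HomCokernel.subsingleton_iff i L).1 this

end ExtGrp

section Length

variable {R A X N L : Type*} [CommRing R] [AddCommGroup A] [Module R A] [AddCommGroup X]
  [Module R X] [AddCommGroup N] [Module R N] [AddCommGroup L] [Module R L]

lemma length_hom_add_length_homCokernel {i : A →ₗ[R] X} {q : X →ₗ[R] N}
    (hiq : Function.Exact i q) (hq : Function.Surjective q) :
    Module.length R (X →ₗ[R] L) + Module.length R (HomCokernel i L) =
      Module.length R (N →ₗ[R] L) + Module.length R (A →ₗ[R] L) := by
  let res := LinearMap.lcomp R L i
  have hrange : Module.length R (A →ₗ[R] L) =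
      Module.length R (LinearMap.range res) + Module.length R (HomCokernel i L) :=
    Module.length_eq_add_of_exact _ _ (Submodule.subtype_injective _) (Submodule.mkQ_surjective _)
      (LinearMap.exact_subtype_mkQ _)
  have hker : Module.length R (X →ₗ[R] L) =
      Module.length R (N →ₗ[R] L) + Module.length R (LinearMap.range res) :=
    Module.length_eq_add_of_exact (LinearMap.lcomp R L q) res.rangeRestrict
      (LinearMap.lcomp_injective_of_surjective q hq) res.surjective_rangeRestrict fun f ↦
        Subtype.ext_iff.trans (LinearMap.exact_lcomp_of_exact_of_surjective L hiq hq f)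
  rw [hker, hrange, add_assoc]

lemma length_eq_length_quotient_add_length (N : Submodule R X) :
    Module.length R X = Module.length R (X ⧸ N) + Module.length R N :=
  (Module.length_eq_add_of_exact _ _ N.subtype_injective N.mkQ_surjective
    (LinearMap.exact_subtype_mkQ N)).trans (add_comm _ _)

lemma length_hom_pi (ι : Type*) [Finite ι] :
    Module.length R ((ι → N) →ₗ[R] L) = ENat.card ι * Module.length R (N →ₗ[R] L) := by
  classical
  have := Fintype.ofFinite ι
  rw [← (LinearMap.lsum R (fun _ : ι ↦ N) R).length_eq, Module.length_pi]

lemma smul_top_le_torsionBySet {I : Ideal R} (hX : I ^ 2 ≤ Module.annihilator R X) :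
    I • (⊤ : Submodule R X) ≤ Submodule.torsionBySet R X I := by
  refine Submodule.smul_le.2 fun a ha x _ ↦ (Submodule.mem_torsionBySet_iff _ _).2 fun b ↦ ?_
  rw [smul_smul]
  exact Module.mem_annihilator.1 (hX (pow_two I ▸ Ideal.mul_mem_mul b.2 ha)) x

lemma isTorsionBySet_smul_top {I : Ideal R} (hX : I ^ 2 ≤ Module.annihilator R X) :
    Module.IsTorsionBySet R ↥(I • (⊤ : Submodule R X)) I :=
  fun x a ↦ Subtype.ext ((Submodule.mem_torsionBySet_iff _ _).1 (smul_top_le_torsionBySet hX x.2) a)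

lemma annihilator_le_annihilator_hom :
    Module.annihilator R X ≤ Module.annihilator R (X →ₗ[R] L) := fun a ha ↦
  Module.mem_annihilator.2 fun f ↦ LinearMap.ext fun x ↦ by
    rw [LinearMap.smul_apply, ← map_smul, Module.mem_annihilator.1 ha, map_zero,
      LinearMap.zero_apply]

/-- The `I`-torsion of `Hom(X, L)` consists of the maps which factor through `X/IX`. -/
noncomputable def torsionBySetHomEquiv (I : Ideal R) (X L : Type*) [AddCommGroup X] [Module R X]
    [AddCommGroup L] [Module R L] :
    ((X ⧸ I • (⊤ : Submodule R X)) →ₗ[R] L) ≃ₗ[R] Submodule.torsionBySet R (X →ₗ[R] L) I :=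
  let π := (I • (⊤ : Submodule R X)).mkQ
  have hπ : Function.Surjective π := Submodule.mkQ_surjective _
  have hrange : LinearMap.range (LinearMap.lcomp R L π) = Submodule.torsionBySet R _ I := by
    ext f
    calc f ∈ LinearMap.range (LinearMap.lcomp R L π)
      _ ↔ I • ⊤ ≤ LinearMap.ker f := by
        refine ⟨?_, fun hf ↦ ⟨(I • ⊤ : Submodule R X).liftQ f hf, Submodule.liftQ_mkQ _ _ hf⟩⟩
        rintro ⟨g, rfl⟩
        exact (Submodule.ker_mkQ _).ge.trans (LinearMap.ker_le_ker_comp π g)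
      _ ↔ f ∈ Submodule.torsionBySet R _ I := by
        simp [Submodule.smul_le, Submodule.mem_torsionBySet_iff, LinearMap.ext_iff]
  (LinearEquiv.ofInjective _ (LinearMap.lcomp_injective_of_surjective π hπ)).trans
    (.ofEq _ _ hrange)

end Length

section LocalRing

open IsLocalRing Module

variable {R : Type*} [CommRing R] [IsLocalRing R]

lemma length_quotient_maximalIdeal : length R (R ⧸ maximalIdeal R) = 1 :=
  length_eq_one_iff.2 (isSimpleModule_iff_quot_maximal.2 ⟨_, maximalIdeal.isMaximal R, ⟨.refl R _⟩⟩)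

lemma exists_linearEquiv_pi_residueField {K : Type*} [AddCommGroup K] [Module R K]
    [Module.Finite R K] (hK : IsTorsionBySet R K (maximalIdeal R)) :
    ∃ n : ℕ, Nonempty (K ≃ₗ[R] (Fin n → R ⧸ maximalIdeal R)) := by
  let _ : Field (R ⧸ maximalIdeal R) := Ideal.Quotient.field _
  let _ : Module (R ⧸ maximalIdeal R) K := hK.module
  have : IsScalarTower R (R ⧸ maximalIdeal R) K := hK.isScalarTower
  have : Module.Finite (R ⧸ maximalIdeal R) K := .of_restrictScalars_finite R _ _
  exact ⟨_, ⟨(finBasis (R ⧸ maximalIdeal R) K).equivFun.restrictScalars R⟩⟩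

lemma length_ne_top_of_isTorsionBySet {K : Type*} [AddCommGroup K] [Module R K] [Module.Finite R K]
    (hK : IsTorsionBySet R K (maximalIdeal R)) : length R K ≠ ⊤ := by
  obtain ⟨n, ⟨e⟩⟩ := exists_linearEquiv_pi_residueField hK
  simp [e.length_eq, length_quotient_maximalIdeal]

lemma length_hom_of_isTorsionBySet {K : Type*} [AddCommGroup K] [Module R K] [Module.Finite R K]
    (hK : IsTorsionBySet R K (maximalIdeal R)) (L : Type*) [AddCommGroup L] [Module R L] :
    length R (K →ₗ[R] L) = length R K * length R ((R ⧸ maximalIdeal R) →ₗ[R] L) := by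
  obtain ⟨n, ⟨e⟩⟩ := exists_linearEquiv_pi_residueField hK
  rw [e.length_eq, (e.congrLeft L R).length_eq, length_hom_pi, length_pi,
    length_quotient_maximalIdeal, mul_one]

lemma length_ne_top_of_sq_le_annihilator [IsNoetherianRing R] {X : Type*} [AddCommGroup X]
    [Module R X] [Module.Finite R X] (hX : maximalIdeal R ^ 2 ≤ annihilator R X) :
    length R X ≠ ⊤ := by
  rw [length_eq_length_quotient_add_length (maximalIdeal R • ⊤ : Submodule R X), Ne,
    ENat.add_eq_top, not_or]
  exact ⟨length_ne_top_of_isTorsionBySet (isTorsionBySet_quotient_ideal_smul X (maximalIdeal R)),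
    length_ne_top_of_isTorsionBySet (isTorsionBySet_smul_top hX)⟩

lemma length_quotient_smul_top_ne_zero {X : Type*} [AddCommGroup X] [Module R X] [Module.Finite R X]
    [Nontrivial X] : length R (X ⧸ maximalIdeal R • (⊤ : Submodule R X)) ≠ 0 := by
  rw [Ne, length_eq_zero_iff, Submodule.Quotient.subsingleton_iff]
  exact (Submodule.top_ne_ideal_smul_of_le_jacobson_annihilator
    (maximalIdeal_le_jacobson _)).symm

lemma length_hom_residue_ne_top [IsNoetherianRing R] {L : Type*} [AddCommGroup L] [Module R L]
    [Module.Finite R L] : length R ((R ⧸ maximalIdeal R) →ₗ[R] L) ≠ ⊤ :=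
  length_ne_top_of_isTorsionBySet fun f a ↦ Module.mem_annihilator.1
    (annihilator_le_annihilator_hom ((Ideal.annihilator_quotient (I := maximalIdeal R)).ge a.2)) f

lemma exists_comp_eq_id_of_mem_socle {X : Type*} [AddCommGroup X] [Module R X] {x : X}
    (hx : x ∈ Submodule.torsionBySet R X (maximalIdeal R))
    (hx' : x ∉ maximalIdeal R • (⊤ : Submodule R X)) :
    ∃ (i : (R ⧸ maximalIdeal R) →ₗ[R] X) (p : X →ₗ[R] R ⧸ maximalIdeal R),
      p ∘ₗ i = LinearMap.id := by
  let _ : Field (R ⧸ maximalIdeal R) := Ideal.Quotient.field _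
  let i : (R ⧸ maximalIdeal R) →ₗ[R] X :=
    (maximalIdeal R).liftQ (LinearMap.toSpanSingleton R X x) fun a ha ↦
      (Submodule.mem_torsionBySet_iff _ _).1 hx ⟨a, ha⟩
  obtain ⟨φ, hφ⟩ : ∃ φ : Dual (R ⧸ maximalIdeal R) (X ⧸ maximalIdeal R • (⊤ : Submodule R X)),
      φ (Submodule.Quotient.mk x) ≠ 0 := by
    by_contra! h
    exact hx' ((Submodule.Quotient.mk_eq_zero _).1 ((forall_dual_apply_eq_zero_iff _ _).1 h))
  refine ⟨i, ((φ (Submodule.Quotient.mk x))⁻¹ • φ).restrictScalars R ∘ₗ Submodule.mkQ _, ?_⟩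
  have hi : i 1 = x := one_smul R x
  ext
  change (φ (Submodule.Quotient.mk x))⁻¹ * φ (Submodule.Quotient.mk (i 1)) = 1
  rw [hi, inv_mul_cancel₀ hφ]

end LocalRing

section Residue

open IsLocalRing Module

variable {R : Type} [CommRing R] [IsLocalRing R]

lemma length_ext_of_isTorsionBySet {K : Type} [AddCommGroup K] [Module R K] [Module.Finite R K]
    (hK : IsTorsionBySet R K (maximalIdeal R)) (L : Type) [AddCommGroup L] [Module R L] :
    length R (ExtGrp R K L 1) = length R K * length R (ExtGrp R (R ⧸ maximalIdeal R) L 1) := by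
  obtain ⟨n, ⟨e⟩⟩ := exists_linearEquiv_pi_residueField hK
  let i : maximalIdeal R →ₗ[R] R := (maximalIdeal R).subtype
  let q : R →ₗ[R] R ⧸ maximalIdeal R := (maximalIdeal R).mkQ
  have hi : Function.Injective i := Submodule.subtype_injective _
  have hiq : Function.Exact i q := LinearMap.exact_subtype_mkQ _
  have hq : Function.Surjective q := Submodule.mkQ_surjective _
  have hpow : Function.Exact (i.compLeft (Fin n)) (q.compLeft (Fin n)) := fun f ↦ by
    refine funext_iff.trans ⟨fun h ↦ ?_, ?_⟩
    · choose g hg using fun j ↦ (hiq (f j)).1 (h j)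
      exact ⟨g, funext hg⟩
    · rintro ⟨g, rfl⟩ j
      exact hiq.apply_apply_eq_zero (g j)
  have := ExtGrp.subsingleton_of_projective (R := R) R L
  have := ExtGrp.subsingleton_of_projective (R := R) (Fin n → R) L
  obtain ⟨e₁⟩ := ExtGrp.nonempty_equiv_homCokernel (L := L) hi hiq hq
  obtain ⟨eₙ⟩ := ExtGrp.nonempty_equiv_homCokernel (L := L) hi.comp_left hpow hq.comp_left
  rw [← (ExtGrp.congr e L 1).length_eq, eₙ.length_eq, (HomCokernel.compLeftEquiv _ i L).length_eq,
    length_pi, e₁.length_eq, e.length_eq, length_pi, length_quotient_maximalIdeal, mul_one]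

variable {L X : Type} [AddCommGroup L] [Module R L] [AddCommGroup X] [Module R X]

lemma length_mul_length_hom_residue [IsNoetherianRing R] [Module.Finite R X]
    (hX : maximalIdeal R ^ 2 ≤ annihilator R X) [Subsingleton (ExtGrp R X L 1)] :
    length R X * length R ((R ⧸ maximalIdeal R) →ₗ[R] L) =
      length R (X →ₗ[R] L) + length R (X ⧸ maximalIdeal R • (⊤ : Submodule R X)) *
        length R (ExtGrp R (R ⧸ maximalIdeal R) L 1) := by
  let mX := maximalIdeal R • (⊤ : Submodule R X)
  have htop : IsTorsionBySet R (X ⧸ mX) (maximalIdeal R) := isTorsionBySet_quotient_ideal_smul X _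
  have hmX : IsTorsionBySet R mX (maximalIdeal R) := isTorsionBySet_smul_top hX
  have hexact : Function.Exact mX.subtype mX.mkQ := LinearMap.exact_subtype_mkQ _
  obtain ⟨e⟩ := ExtGrp.nonempty_equiv_homCokernel (L := L) mX.subtype_injective hexact
    mX.mkQ_surjective
  rw [← length_ext_of_isTorsionBySet htop L, e.length_eq,
    length_hom_add_length_homCokernel hexact mX.mkQ_surjective,
    length_hom_of_isTorsionBySet htop, length_hom_of_isTorsionBySet hmX, ← add_mul,
    length_eq_length_quotient_add_length mX]

lemma torsionBySet_le_smul_top [Subsingleton (ExtGrp R X L 1)]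
    (hk : ¬ Subsingleton (ExtGrp R (R ⧸ maximalIdeal R) L 1)) :
    Submodule.torsionBySet R X (maximalIdeal R) ≤ maximalIdeal R • (⊤ : Submodule R X) := by
  intro x hx
  by_contra hx'
  obtain ⟨i, p, hpi⟩ := exists_comp_eq_id_of_mem_socle hx hx'
  exact hk (ExtGrp.subsingleton_of_retract hpi)

lemma length_hom_eq_mul_of_subsingleton_ext {N : Type} [AddCommGroup N] [Module R N]
    (hN : IsFiniteLength R N) [hk : Subsingleton (ExtGrp R (R ⧸ maximalIdeal R) L 1)] :
    length R (N →ₗ[R] L) = length R N * length R ((R ⧸ maximalIdeal R) →ₗ[R] L) := by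
  induction hN with
  | of_subsingleton => simp
  | @of_simple_quotient N _ _ N' _ _ ih =>
    obtain ⟨e⟩ : Nonempty ((N ⧸ N') ≃ₗ[R] R ⧸ maximalIdeal R) := by
      obtain ⟨I, hI, e⟩ := isSimpleModule_iff_quot_maximal.1 ‹IsSimpleModule R (N ⧸ N')›
      rwa [eq_maximalIdeal hI] at e
    have hexact : Function.Exact N'.subtype N'.mkQ := LinearMap.exact_subtype_mkQ _
    have : Subsingleton (ExtGrp R (N ⧸ N') L 1) := (ExtGrp.congr e L 1).symm.toEquiv.subsingleton
    have := (HomCokernel.subsingleton_iff _ L).2 <|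
      ExtGrp.lcomp_surjective N'.subtype_injective hexact N'.mkQ_surjective
    have hlen := length_hom_add_length_homCokernel (L := L) hexact N'.mkQ_surjective
    rw [length_eq_zero (M := HomCokernel _ L), add_zero] at hlen
    rw [hlen, ih, (e.congrLeft L R).length_eq,
      length_eq_length_quotient_add_length N', e.length_eq, length_quotient_maximalIdeal, add_mul,
      one_mul]


variable {Y : Type} [AddCommGroup Y] [Module R Y]

lemma length_eq_add_mul_of_equiv_hom [Module.Finite R Y] (e : X ≃ₗ[R] (Y →ₗ[R] L))
    (hX : maximalIdeal R ^ 2 ≤ annihilator R X) [Subsingleton (ExtGrp R X L 1)]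
    (hk : ¬ Subsingleton (ExtGrp R (R ⧸ maximalIdeal R) L 1)) :
    length R X = length R (X ⧸ maximalIdeal R • (⊤ : Submodule R X)) +
      length R (Y ⧸ maximalIdeal R • (⊤ : Submodule R Y)) *
        length R ((R ⧸ maximalIdeal R) →ₗ[R] L) := by
  have hsoc : maximalIdeal R • (⊤ : Submodule R X) = Submodule.torsionBySet R X (maximalIdeal R) :=
    (smul_top_le_torsionBySet hX).antisymm (torsionBySet_le_smul_top hk)
  have hmap : (Submodule.torsionBySet R X (maximalIdeal R)).map e.toLinearMap =
      Submodule.torsionBySet R (Y →ₗ[R] L) (maximalIdeal R) := by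
    ext f
    simp [Submodule.mem_map_equiv, Submodule.mem_torsionBySet_iff, ← map_smul]
  let esoc := (e.submoduleMap (Submodule.torsionBySet R X (maximalIdeal R))).trans (.ofEq _ _ hmap)
  rw [← length_hom_of_isTorsionBySet (isTorsionBySet_quotient_ideal_smul Y _),
    (torsionBySetHomEquiv _ Y L).length_eq, ← esoc.length_eq, ← hsoc,
    ← length_eq_length_quotient_add_length]

lemma length_hom_residue_sq_eq_one [Nontrivial X] (e : X ≃ₗ[R] (Y →ₗ[R] L))
    (e' : Y ≃ₗ[R] (X →ₗ[R] L)) (hX : length R X ≠ ⊤) (hY : length R Y ≠ ⊤)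
    [Subsingleton (ExtGrp R (R ⧸ maximalIdeal R) L 1)] :
    length R ((R ⧸ maximalIdeal R) →ₗ[R] L) ^ 2 = 1 := by
  set r := length R ((R ⧸ maximalIdeal R) →ₗ[R] L)
  have hXY : length R X = length R Y * r :=
    e.length_eq.trans (length_hom_eq_mul_of_subsingleton_ext (length_ne_top_iff.1 hY))
  have hYX : length R Y = length R X * r :=
    e'.length_eq.trans (length_hom_eq_mul_of_subsingleton_ext (length_ne_top_iff.1 hX))
  have h0 : length R X ≠ 0 := length_eq_zero_iff.not.2 (not_subsingleton X)
  refine (ENat.mul_right_strictMono h0 hX).injective (?_ : length R X * r ^ 2 = length R X * 1)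
  rw [mul_one, pow_two, ← mul_assoc, ← hYX, ← hXY]

lemma add_one_eq_sq_of_mul_eq {b b' r ε : ℕ∞} (hb₀ : b ≠ 0) (hb : b ≠ ⊤) (hb' : b' ≠ ⊤) (hr : r ≠ ⊤)
    (hbr : (b + b' * r) * r = b' + b * r + b * ε) (hb'r : (b' + b * r) * r = b + b' * r + b' * ε) :
    ε + 1 = r ^ 2 := by
  have hX' : b * r ^ 2 = b + b' * ε := by
    refine ENat.add_left_injective_of_ne_top (WithTop.mul_ne_top hb' hr) ?_
    calc b * r ^ 2 + b' * r
      _ = (b' + b * r) * r := by ring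
      _ = b + b' * ε + b' * r := by rw [hb'r]; ring
  have hY' : b' * r ^ 2 = b' + b * ε := by
    refine ENat.add_left_injective_of_ne_top (WithTop.mul_ne_top hb hr) ?_
    calc b' * r ^ 2 + b * r
      _ = (b + b' * r) * r := by ring
      _ = b' + b * ε + b * r := by rw [hbr]; ring
  have h0 : b + b' ≠ 0 := fun h ↦ hb₀ (add_eq_zero.1 h).1
  have htop : b + b' ≠ ⊤ := WithTop.add_ne_top.2 ⟨hb, hb'⟩
  refine (ENat.mul_right_strictMono h0 htop).injective ?_
  calc (b + b') * (ε + 1)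
    _ = (b + b' * ε) + (b' + b * ε) := by ring
    _ = (b + b') * r ^ 2 := by rw [← hX', ← hY', add_mul]

variable [IsNoetherianRing R] [Module.Finite R X] [Module.Finite R Y] [Module.Finite R L]

lemma length_ext_residue_add_one_of_not_subsingleton [Nontrivial X] (e : X ≃ₗ[R] (Y →ₗ[R] L))
    (e' : Y ≃ₗ[R] (X →ₗ[R] L)) (hX : maximalIdeal R ^ 2 ≤ annihilator R X)
    (hY : maximalIdeal R ^ 2 ≤ annihilator R Y) [Subsingleton (ExtGrp R X L 1)]
    [Subsingleton (ExtGrp R Y L 1)] (hk : ¬ Subsingleton (ExtGrp R (R ⧸ maximalIdeal R) L 1)) :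
    length R (ExtGrp R (R ⧸ maximalIdeal R) L 1) + 1 =
      length R ((R ⧸ maximalIdeal R) →ₗ[R] L) ^ 2 := by
  have hsumX := length_eq_add_mul_of_equiv_hom e hX hk
  have hsumY := length_eq_add_mul_of_equiv_hom e' hY hk
  have heulerX := length_mul_length_hom_residue (L := L) hX
  have heulerY := length_mul_length_hom_residue (L := L) hY
  rw [← e'.length_eq, hsumX, hsumY] at heulerX
  rw [← e.length_eq, hsumX, hsumY] at heulerY
  exact add_one_eq_sq_of_mul_eq length_quotient_smul_top_ne_zero
    (length_ne_top_of_isTorsionBySet (isTorsionBySet_quotient_ideal_smul X _))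
    (length_ne_top_of_isTorsionBySet (isTorsionBySet_quotient_ideal_smul Y _))
    length_hom_residue_ne_top heulerX heulerY

lemma length_ext_residue_add_one [Nontrivial X] (e : X ≃ₗ[R] (Y →ₗ[R] L))
    (e' : Y ≃ₗ[R] (X →ₗ[R] L)) (hX : maximalIdeal R ^ 2 ≤ annihilator R X)
    [Subsingleton (ExtGrp R X L 1)] [Subsingleton (ExtGrp R Y L 1)] :
    length R (ExtGrp R (R ⧸ maximalIdeal R) L 1) + 1 =
      length R ((R ⧸ maximalIdeal R) →ₗ[R] L) ^ 2 := by
  have hY : maximalIdeal R ^ 2 ≤ annihilator R Y :=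
    (hX.trans annihilator_le_annihilator_hom).trans_eq e'.annihilator_eq.symm
  by_cases hk : Subsingleton (ExtGrp R (R ⧸ maximalIdeal R) L 1)
  · rw [length_eq_zero, zero_add, length_hom_residue_sq_eq_one e e'
      (length_ne_top_of_sq_le_annihilator hX) (length_ne_top_of_sq_le_annihilator hY)]
  · exact length_ext_residue_add_one_of_not_subsingleton e e' hX hY hk

end Residue

section Dual

open Module

variable {R M : Type*} [CommRing R] [AddCommGroup M] [Module R M]

lemma pow_le_annihilator_of_forall_dual_apply_mem {I : Ideal R}
    (hM : Function.Injective (Dual.eval R M)) (hI : ∀ (φ : Dual R M) (x : M), φ x ∈ I) {n : ℕ}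
    (hn : I ^ (n + 1) = ⊥) : I ^ n ≤ annihilator R M := by
  refine fun a ha ↦ mem_annihilator.2 fun x ↦ hM <| LinearMap.ext fun φ ↦ ?_
  rw [map_zero, LinearMap.zero_apply, Dual.eval_apply, map_smul, ← Ideal.mem_bot, ← hn, pow_succ]
  exact Ideal.mul_mem_mul ha (hI φ x)

end Dual

namespace IsIndecomposableModule

variable {R M : Type} [CommRing R] [AddCommGroup M] [Module R M]

lemma eq_zero_or_injective_of_isIdempotentElem (hM : IsIndecomposableModule R M)
    {T : Module.End R M} (hT : IsIdempotentElem T) : T = 0 ∨ Function.Injective T :=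
  (hM.2 _ _ (LinearMap.IsIdempotentElem.isCompl hT)).imp LinearMap.range_eq_bot.1
    LinearMap.ker_eq_bot.1

lemma free_of_isUnit_dual_apply (hM : IsIndecomposableModule R M) {φ : Module.Dual R M} {x : M}
    (hx : IsUnit (φ x)) : Module.Free R M := by
  obtain ⟨u, hu⟩ := hx
  let y : M := (↑u⁻¹ : R) • x
  have hy : φ y = 1 := by rw [map_smul, ← hu, smul_eq_mul, Units.inv_mul]
  have hT : IsIdempotentElem (φ.smulRight y : Module.End R M) := LinearMap.ext fun z ↦ by
    simp [hy]
  rcases hM.eq_zero_or_injective_of_isIdempotentElem hT with hzero | hinj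
  · have hR : (1 : R) = 0 := by
      have hy0 : y = 0 := by simpa [hy] using LinearMap.congr_fun hzero y
      rw [← hy, hy0, map_zero]
    have := subsingleton_of_zero_eq_one hR.symm
    have := Module.subsingleton R M
    exact .of_subsingleton R M
  · have hφinj : Function.Injective φ := fun a b hab ↦ hinj (congrArg (· • y) hab)
    have hφsurj : Function.Surjective φ := fun a ↦
      ⟨a • y, by rw [map_smul, hy, smul_eq_mul, mul_one]⟩
    exact .of_equiv (LinearEquiv.ofBijective φ ⟨hφinj, hφsurj⟩).symm

end IsIndecomposableModule

lemma mlength_eq_length (R M : Type) [CommRing R] [AddCommGroup M] [Module R M] :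
    mlength R M = (Module.length R M : ℕ∞) :=
  (Module.coe_length R M).symm

theorem stmt_9_general (R : Type) [CommRing R] [IsNoetherianRing R] [IsLocalRing R]
    (M : Type) [AddCommGroup M] [Module R M] [Module.Finite R M] [Nontrivial M]
    [Module.IsReflexive R M] (hM : IsLocalRing.maximalIdeal R ^ 2 ≤ Module.annihilator R M)
    [Subsingleton (ExtGrp R M R 1)] [Subsingleton (ExtGrp R (Module.Dual R M) R 1)] :
    ∃ r : ℕ, typeLen R = (r : ℕ∞) ∧
      mlength R (ExtGrp R (R ⧸ IsLocalRing.maximalIdeal R) R 1) =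
        ((r ^ 2 - 1 : ℕ) : ℕ∞) := by
  obtain ⟨r, hr⟩ := ENat.ne_top_iff_exists.1 (length_hom_residue_ne_top (R := R) (L := R))
  have hext := length_ext_residue_add_one (L := R) (Module.evalEquiv R M) (.refl R _) hM
  refine ⟨r, (mlength_eq_length R _).trans (congrArg _ hr.symm),
    (mlength_eq_length R _).trans (congrArg _ ?_)⟩
  rw [← hr] at hext
  rw [ENat.natCast_sub, Nat.cast_pow, ← hext, Nat.cast_one]
  exact ((ENat.addLECancellable_of_ne_top ENat.one_ne_top).add_tsub_cancel_right).symm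

/-- dim_k Ext¹(k,R) = r² - 1. -/
theorem stmt_9 (R : Type) [CommRing R] [IsNoetherianRing R] [IsLocalRing R]
    (hng : ¬ IsGorensteinLocalRing R)
    (hm3 : (IsLocalRing.maximalIdeal R) ^ 3 = ⊥)
    (hm2 : (IsLocalRing.maximalIdeal R) ^ 2 ≠ ⊥)
    (M : Type) [AddCommGroup M] [Module R M] [Module.Finite R M]
    (hind : IsIndecomposableModule R M) (hnf : ¬ Module.Free R M)
    (hG : GDimZero R M) :
    ∃ r : ℕ, typeLen R = (r : ℕ∞) ∧
      mlength R (ExtGrp R (R ⧸ IsLocalRing.maximalIdeal R) R 1) =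
        ((r ^ 2 - 1 : ℕ) : ℕ∞) := by
  have : Nontrivial M := (Submodule.nontrivial_iff R).1 ⟨_, _, hind.1⟩
  have : Module.IsReflexive R M := ⟨hG.1⟩
  have : Subsingleton (ExtGrp R M R 1) := hG.2.1 1 one_pos
  have : Subsingleton (ExtGrp R (Module.Dual R M) R 1) := hG.2.2 1 one_pos
  have hdual : ∀ (φ : Module.Dual R M) (x : M), φ x ∈ IsLocalRing.maximalIdeal R := fun φ x ↦
    (IsLocalRing.mem_maximalIdeal _).2 fun h ↦ hnf (hind.free_of_isUnit_dual_apply h)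
  exact stmt_9_general R M (pow_le_annihilator_of_forall_dual_apply_mem hG.1.1 hdual hm3)
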